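/- arXiv:2305.00968 — 2 statements merged into one kernel-verified Lean document; each statement's English description precedes it below -/
import Mathlib

section
/- For every countable ordinal α < ω₁ there exists an ordinal β < ω^ω · 2 (ordinal arithmetic, i.e., β < ω^ω + ω^ω) such that α and β have the same monadic second-order theory as linear orders. Concretely: writing α = ω^ω · α₁ + α₂ with α₂ < ω^ω, the ordinal ω^ω + α₂ (when α₁ ≥ 1) satisfies exactly the same monadic sentences as α. -/
/-- Monadic second-order formulas over a linear order with `m` unary predicates,
`k` free element variables and `l` free set variables (de Bruijn indexed). -/
inductive MSO (m : ℕ) : ℕ → ℕ → Type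
  | lt {k l : ℕ} (i j : Fin k) : MSO m k l
  | eq {k l : ℕ} (i j : Fin k) : MSO m k l
  | mem {k l : ℕ} (i : Fin k) (X : Fin l) : MSO m k l
  | pred {k l : ℕ} (p : Fin m) (i : Fin k) : MSO m k l
  | not {k l : ℕ} (φ : MSO m k l) : MSO m k l
  | and {k l : ℕ} (φ ψ : MSO m k l) : MSO m k l
  | exElem {k l : ℕ} (φ : MSO m (k + 1) l) : MSO m k l
  | exSet {k l : ℕ} (φ : MSO m k (l + 1)) : MSO m k l

/-- Satisfaction of an MSO formula in a linear order `α` with unary predicates `P`. -/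
def MSO.Sat {m : ℕ} {α : Type*} [LinearOrder α] (P : Fin m → Set α) :
    ∀ {k l : ℕ}, MSO m k l → (Fin k → α) → (Fin l → Set α) → Prop
  | _, _, .lt i j, e, _ => e i < e j
  | _, _, .eq i j, e, _ => e i = e j
  | _, _, .mem i X, e, s => e i ∈ s X
  | _, _, .pred p i, e, _ => e i ∈ P p
  | _, _, .not φ, e, s => ¬ φ.Sat P e s
  | _, _, .and φ ψ, e, s => φ.Sat P e s ∧ ψ.Sat P e s
  | _, _, .exElem φ, e, s => ∃ a : α, φ.Sat P (Fin.cons a e) s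
  | _, _, .exSet φ, e, s => ∃ A : Set α, φ.Sat P e (Fin.cons A s)

/-- Quantifier depth of an MSO formula. -/
def MSO.depth {m : ℕ} : ∀ {k l : ℕ}, MSO m k l → ℕ
  | _, _, .not φ => φ.depth
  | _, _, .and φ ψ => max φ.depth ψ.depth
  | _, _, .exElem φ => φ.depth + 1
  | _, _, .exSet φ => φ.depth + 1
  | _, _, _ => 0

/-- Satisfaction of an MSO sentence (no free variables). -/
def MSO.SatS {m : ℕ} {α : Type*} [LinearOrder α] (P : Fin m → Set α) (φ : MSO m 0 0) : Prop :=
  φ.Sat P (fun i => i.elim0) (fun i => i.elim0)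

/-- Two ordinals, viewed as linear orders, satisfy the same monadic sentences. -/
def OrdMSOEquiv (a b : Ordinal) : Prop :=
  ∀ φ : MSO 0 0 0,
    MSO.SatS (α := ↥(Set.Iio a)) (fun p => p.elim0) φ ↔
    MSO.SatS (α := ↥(Set.Iio b)) (fun p => p.elim0) φ

/-- Codes for the Hintikka types of depth `n` of `l` subsets of a linear order. -/
def HType : ℕ → ℕ → Type
  | 0, l => Set (Fin l × Fin l) × Set (Fin l × Fin l)
  | n + 1, l => Set (HType n (l + 1))

theorem HType.finite : ∀ n l : ℕ, Finite (HType n l)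
  | 0, l => inferInstanceAs (Finite (Set (Fin l × Fin l) × Set (Fin l × Fin l)))
  | n + 1, l => by
    have := HType.finite n (l + 1)
    exact inferInstanceAs (Finite (Set (HType n (l + 1))))

/-- The Hintikka type of depth `n` of a tuple of subsets of a linear order. At depth `0` it
records which pairs of sets meet, and which pairs contain elements `x < y`. -/
def htype {A : Type*} [LinearOrder A] : ∀ (n : ℕ) {l : ℕ}, (Fin l → Set A) → HType n l
  | 0, _, s => ({p | ∃ x, x ∈ s p.1 ∧ x ∈ s p.2}, {p | ∃ x ∈ s p.1, ∃ y ∈ s p.2, x < y})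
  | n + 1, _, s => {τ | ∃ S : Set A, htype n (Fin.cons S s : Fin _ → Set A) = τ}

section Types

variable {A B : Type*} [LinearOrder A] [LinearOrder B]

theorem htype_zero_eq_iff {l : ℕ} {s : Fin l → Set A} {t : Fin l → Set B} :
    htype 0 s = htype 0 t ↔
      (∀ i j, (∃ x, x ∈ s i ∧ x ∈ s j) ↔ ∃ x, x ∈ t i ∧ x ∈ t j) ∧
      (∀ i j, (∃ x ∈ s i, ∃ y ∈ s j, x < y) ↔ ∃ x ∈ t i, ∃ y ∈ t j, x < y) := by
  refine Prod.ext_iff.trans (and_congr ?_ ?_) <;>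
  exact Set.ext_iff.trans Prod.forall

theorem htype_succ_eq_iff {n l : ℕ} {s : Fin l → Set A} {t : Fin l → Set B} :
    htype (n + 1) s = htype (n + 1) t ↔
      (∀ S : Set A, ∃ T : Set B, htype n (Fin.cons S s : Fin _ → Set A) =
        htype n (Fin.cons T t : Fin _ → Set B)) ∧
      (∀ T : Set B, ∃ S : Set A, htype n (Fin.cons S s : Fin _ → Set A) =
        htype n (Fin.cons T t : Fin _ → Set B)) := by
  constructor
  · intro h
    have h' := Set.ext_iff.1 h
    refine ⟨fun S => ?_, fun T => (h' _).2 ⟨T, rfl⟩⟩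
    obtain ⟨T, hT⟩ := (h' _).1 ⟨S, rfl⟩
    exact ⟨T, hT.symm⟩
  · rintro ⟨h₁, h₂⟩
    refine Set.ext fun τ => ⟨?_, ?_⟩
    · rintro ⟨S, rfl⟩
      obtain ⟨T, hT⟩ := h₁ S
      exact ⟨T, hT.symm⟩
    · rintro ⟨T, rfl⟩
      exact h₂ T

theorem htype_zero_eq_of_htype_eq {n : ℕ} : ∀ {l : ℕ} {s : Fin l → Set A} {t : Fin l → Set B},
    htype n s = htype n t → htype 0 s = htype 0 t := by
  induction n with
  | zero => exact fun h => h
  | succ n ih =>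
    intro l s t h
    obtain ⟨T, hT⟩ := (htype_succ_eq_iff.1 h).1 ∅
    have h₀ := htype_zero_eq_iff.1 (ih hT)
    exact htype_zero_eq_iff.2 ⟨fun i j => by simpa using h₀.1 i.succ j.succ,
      fun i j => by simpa using h₀.2 i.succ j.succ⟩

theorem eq_singleton_of_htype_eq {n l : ℕ} {s : Fin l → Set A} {t : Fin l → Set B}
    (h : htype n s = htype n t) {i : Fin l} {a : A} (hi : s i = {a}) : ∃ b, t i = {b} := by
  obtain ⟨h₁, h₂⟩ := htype_zero_eq_iff.1 (htype_zero_eq_of_htype_eq h)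
  obtain ⟨b, hb, -⟩ := (h₁ i i).1 ⟨a, by simp [hi]⟩
  have h₃ : ¬ ∃ x ∈ t i, ∃ y ∈ t i, x < y := by
    rw [← h₂ i i]
    simp [hi]
  refine ⟨b, Set.eq_singleton_iff_unique_mem.2 ⟨hb, fun c hc => ?_⟩⟩
  by_contra hne
  rcases lt_or_gt_of_ne hne with hlt | hlt
  · exact h₃ ⟨c, hc, b, hb, hlt⟩
  · exact h₃ ⟨b, hb, c, hc, hlt⟩

/-- Equality of Hintikka types implies agreement on formulas of bounded depth; element variables
are represented by singletons. -/
theorem MSO.sat_iff_of_htype_eq (P : Fin 0 → Set A) (Q : Fin 0 → Set B) {k l : ℕ}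
    (φ : MSO 0 k l) : ∀ {n N : ℕ} {u : Fin N → Set A} {v : Fin N → Set B}
    {e : Fin k → A} {e' : Fin k → B} (ι : Fin k → Fin N) (κ : Fin l → Fin N),
    φ.depth ≤ n → htype n u = htype n v →
    (∀ i, u (ι i) = {e i}) → (∀ i, v (ι i) = {e' i}) →
    (φ.Sat P e (fun X => u (κ X)) ↔ φ.Sat Q e' (fun X => v (κ X))) := by
  induction φ with
  | lt i j =>
    intro n N u v e e' ι κ _ h hu hv
    have := (htype_zero_eq_iff.1 (htype_zero_eq_of_htype_eq h)).2 (ι i) (ι j)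
    simpa [hu, hv, MSO.Sat] using this
  | eq i j =>
    intro n N u v e e' ι κ _ h hu hv
    have := (htype_zero_eq_iff.1 (htype_zero_eq_of_htype_eq h)).1 (ι i) (ι j)
    simpa [hu, hv, MSO.Sat] using this
  | mem i X =>
    intro n N u v e e' ι κ _ h hu hv
    have := (htype_zero_eq_iff.1 (htype_zero_eq_of_htype_eq h)).1 (ι i) (κ X)
    simpa [hu, hv, MSO.Sat] using this
  | pred p => exact p.elim0
  | not φ ih =>
    intro n N u v e e' ι κ hn h hu hv
    exact not_congr (ih ι κ hn h hu hv)
  | and φ ψ ihφ ihψ =>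
    intro n N u v e e' ι κ hn h hu hv
    exact and_congr (ihφ ι κ ((le_max_left _ _).trans hn) h hu hv)
      (ihψ ι κ ((le_max_right _ _).trans hn) h hu hv)
  | exElem φ ih =>
    intro n N u v e e' ι κ hn h hu hv
    obtain _ | n := n
    · simp [MSO.depth] at hn
    replace hn : φ.depth ≤ n := Nat.le_of_succ_le_succ hn
    have key : ∀ (a : A) (b : B), htype n (Fin.cons {a} u : Fin _ → Set A) =
        htype n (Fin.cons {b} v : Fin _ → Set B) →
        (φ.Sat P (Fin.cons a e) (fun X => u (κ X)) ↔
          φ.Sat Q (Fin.cons b e') (fun X => v (κ X))) := by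
      intro a b hab
      have := ih (e := Fin.cons a e) (e' := Fin.cons b e')
        (Fin.cons 0 fun i => (ι i).succ) (fun X => (κ X).succ) hn hab
        (fun i => by cases i using Fin.cases <;> simp [hu])
        (fun i => by cases i using Fin.cases <;> simp [hv])
      simpa using this
    obtain ⟨h₁, h₂⟩ := htype_succ_eq_iff.1 h
    constructor
    · rintro ⟨a, ha⟩
      obtain ⟨T, hT⟩ := h₁ {a}
      obtain ⟨b, hb⟩ := eq_singleton_of_htype_eq hT (i := 0) (a := a) rfl
      obtain rfl : T = {b} := hb
      exact ⟨b, (key a b hT).1 ha⟩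
    · rintro ⟨b, hb⟩
      obtain ⟨S, hS⟩ := h₂ {b}
      obtain ⟨a, ha⟩ := eq_singleton_of_htype_eq hS.symm (i := 0) (a := b) rfl
      obtain rfl : S = {a} := ha
      exact ⟨a, (key a b hS).2 hb⟩
  | exSet φ ih =>
    intro n N u v e e' ι κ hn h hu hv
    obtain _ | n := n
    · simp [MSO.depth] at hn
    replace hn : φ.depth ≤ n := Nat.le_of_succ_le_succ hn
    have key : ∀ (S : Set A) (T : Set B), htype n (Fin.cons S u : Fin _ → Set A) =
        htype n (Fin.cons T v : Fin _ → Set B) →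
        (φ.Sat P e (Fin.cons S fun X => u (κ X)) ↔
          φ.Sat Q e' (Fin.cons T fun X => v (κ X))) := by
      intro S T hST
      have := ih (e := e) (e' := e') (fun i => (ι i).succ)
        (Fin.cons 0 fun X => (κ X).succ) hn hST (by simpa using hu) (by simpa using hv)
      convert this using 2 <;>
      · funext X
        cases X using Fin.cases <;> simp
    obtain ⟨h₁, h₂⟩ := htype_succ_eq_iff.1 h
    constructor
    · rintro ⟨S, hS⟩
      obtain ⟨T, hT⟩ := h₁ S
      exact ⟨T, (key S T hT).1 hS⟩
    · rintro ⟨T, hT⟩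
      obtain ⟨S, hS⟩ := h₂ T
      exact ⟨S, (key S T hS).2 hT⟩

/-- The maps `h i : C i → A` exhibit `A` as the ordered sum of the orders `C i`. -/
structure IsOrderedSum {I : Type*} [LinearOrder I] {C : I → Type*} [∀ i, LinearOrder (C i)]
    (h : ∀ i, C i → A) : Prop where
  strictMono : ∀ i, StrictMono (h i)
  lt_of_lt : ∀ {i j}, i < j → ∀ x y, h i x < h j y
  surj : ∀ a, ∃ i x, h i x = a

namespace IsOrderedSum

variable {I : Type*} [LinearOrder I] {C : I → Type*} [∀ i, LinearOrder (C i)]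
  {D : I → Type*} [∀ i, LinearOrder (D i)] {f : ∀ i, C i → A} {g : ∀ i, D i → B}

theorem exists_preimage_eq (hf : IsOrderedSum f) (T : ∀ i, Set (C i)) :
    ∃ S : Set A, ∀ i, f i ⁻¹' S = T i := by
  refine ⟨⋃ i, f i '' T i, fun i => Set.ext fun x => ?_⟩
  simp only [Set.mem_preimage, Set.mem_iUnion, Set.mem_image]
  refine ⟨?_, fun hx => ⟨i, x, hx, rfl⟩⟩
  rintro ⟨j, y, hy, hxy⟩
  rcases lt_trichotomy i j with hij | rfl | hij
  · exact absurd hxy (hf.lt_of_lt hij x y).ne'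
  · rwa [← (hf.strictMono _).injective hxy]
  · exact absurd hxy (hf.lt_of_lt hij y x).ne

theorem exists_mem_iff (hf : IsOrderedSum f) (S T : Set A) :
    (∃ x, x ∈ S ∧ x ∈ T) ↔ ∃ i, ∃ x, x ∈ f i ⁻¹' S ∧ x ∈ f i ⁻¹' T := by
  constructor
  · rintro ⟨a, h⟩
    obtain ⟨i, x, rfl⟩ := hf.surj a
    exact ⟨i, x, h⟩
  · rintro ⟨i, x, h⟩
    exact ⟨_, h⟩

theorem exists_lt_iff (hf : IsOrderedSum f) (S T : Set A) :
    (∃ x ∈ S, ∃ y ∈ T, x < y) ↔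
      (∃ i, ∃ x ∈ f i ⁻¹' S, ∃ y ∈ f i ⁻¹' T, x < y) ∨
      ∃ i j, i < j ∧ (∃ x, x ∈ f i ⁻¹' S ∧ x ∈ f i ⁻¹' S) ∧
        ∃ y, y ∈ f j ⁻¹' T ∧ y ∈ f j ⁻¹' T := by
  constructor
  · rintro ⟨a, ha, b, hb, hab⟩
    obtain ⟨i, x, rfl⟩ := hf.surj a
    obtain ⟨j, y, rfl⟩ := hf.surj b
    rcases lt_trichotomy i j with hij | rfl | hij
    · exact Or.inr ⟨i, j, hij, ⟨x, ha, ha⟩, y, hb, hb⟩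
    · exact Or.inl ⟨i, x, ha, y, hb, (hf.strictMono i).lt_iff_lt.1 hab⟩
    · exact absurd hab (hf.lt_of_lt hij y x).not_gt
  · rintro (⟨i, x, hx, y, hy, hxy⟩ | ⟨i, j, hij, ⟨x, hx, -⟩, y, hy, -⟩)
    · exact ⟨_, hx, _, hy, hf.strictMono i hxy⟩
    · exact ⟨_, hx, _, hy, hf.lt_of_lt hij x y⟩

/-- The Hintikka type of an ordered sum is determined by those of the summands. -/
theorem htype_eq (hf : IsOrderedSum f) (hg : IsOrderedSum g) {n : ℕ} :
    ∀ {l : ℕ} {s : Fin l → Set A} {t : Fin l → Set B},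
    (∀ i, htype n (fun j => f i ⁻¹' s j) = htype n (fun j => g i ⁻¹' t j)) →
      htype n s = htype n t := by
  induction n with
  | zero =>
    intro l s t h
    have h' := fun i => htype_zero_eq_iff.1 (h i)
    refine htype_zero_eq_iff.2 ⟨fun i j => ?_, fun i j => ?_⟩
    · rw [hf.exists_mem_iff, hg.exists_mem_iff]
      exact exists_congr fun c => (h' c).1 i j
    · rw [hf.exists_lt_iff, hg.exists_lt_iff]
      exact or_congr (exists_congr fun c => (h' c).2 i j)
        (exists_congr fun c => exists_congr fun d => and_congr_right fun _ =>
          and_congr ((h' c).1 i i) ((h' d).1 j j))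
  | succ n ih =>
    intro l s t h
    have h' := fun i => htype_succ_eq_iff.1 (h i)
    have key : ∀ (S : Set A) (T : Set B),
        (∀ i, htype n (Fin.cons (f i ⁻¹' S) fun j => f i ⁻¹' s j : Fin _ → Set (C i)) =
          htype n (Fin.cons (g i ⁻¹' T) fun j => g i ⁻¹' t j : Fin _ → Set (D i))) →
        htype n (Fin.cons S s : Fin _ → Set A) = htype n (Fin.cons T t : Fin _ → Set B) := by
      intro S T hST
      refine ih fun i => ?_
      convert hST i using 2 <;>
      · funext j
        cases j using Fin.cases <;> simp
    refine htype_succ_eq_iff.2 ⟨fun S => ?_, fun T => ?_⟩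
    · choose T' hT' using fun i => (h' i).1 (f i ⁻¹' S)
      obtain ⟨T, hT⟩ := hg.exists_preimage_eq T'
      exact ⟨T, key S T fun i => by rw [hT, hT']⟩
    · choose S' hS' using fun i => (h' i).2 (g i ⁻¹' T)
      obtain ⟨S, hS⟩ := hf.exists_preimage_eq S'
      exact ⟨S, key S T fun i => by rw [hS, hS']⟩

end IsOrderedSum

end Types

universe u v

/-- The Hintikka type of depth `n` of an ordinal, as a linear order without predicates. -/
noncomputable def Ordinal.htype (n : ℕ) (a : Ordinal) : HType n 0 :=
  _root_.htype n (A := Set.Iio a) fun i => i.elim0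

namespace Ordinal

theorem ordMSOEquiv_of_htype_eq {a b : Ordinal} (h : ∀ n, htype n a = htype n b) :
    OrdMSOEquiv a b := fun φ =>
  (φ.sat_iff_of_htype_eq _ _ id id le_rfl (h φ.depth) (fun i => i.elim0) fun i => i.elim0).trans
    (by rfl)

theorem htype_lift (n : ℕ) (a : Ordinal.{u}) : htype n (lift.{v} a) = htype n a := by
  have h₁ : IsOrderedSum (fun (_ : Unit) (x : Set.Iio a) =>
      (⟨lift.{v} x.1, lift_lt.2 x.2⟩ : Set.Iio (lift.{v} a))) := by
    refine ⟨fun _ x y hxy => lift_lt.2 hxy, fun hij => absurd hij (lt_irrefl _), fun x => ?_⟩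
    obtain ⟨y, hy, hya⟩ := lt_lift_iff.1 x.2
    exact ⟨(), ⟨y, hy⟩, Subtype.ext hya⟩
  have h₂ : IsOrderedSum (fun (_ : Unit) (x : Set.Iio a) => x) :=
    ⟨fun _ => strictMono_id, fun hij => absurd hij (lt_irrefl _), fun x => ⟨(), x, rfl⟩⟩
  exact h₁.htype_eq h₂ fun _ => congrArg _ (funext fun j => j.elim0)

theorem lift_omega0_pow (k : ℕ) :
    lift.{v} ((ω : Ordinal.{u}) ^ k) = (ω : Ordinal.{max u v}) ^ k := by
  induction k with
  | zero => simp
  | succ k ih => rw [pow_succ, pow_succ, lift_mul, ih, lift_omega0]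

theorem lt_omega0_opow_omega0_iff {a : Ordinal} : a < ω ^ (ω : Ordinal) ↔ ∃ k : ℕ, a < ω ^ k := by
  rw [lt_opow_of_isSuccLimit omega0_ne_zero isSuccLimit_omega0]
  constructor
  · rintro ⟨c, hc, hac⟩
    obtain ⟨k, rfl⟩ := lt_omega0.1 hc
    exact ⟨k, by rwa [opow_natCast] at hac⟩
  · rintro ⟨k, hk⟩
    exact ⟨k, natCast_lt_omega0 k, by rwa [opow_natCast]⟩

theorem lift_omega0_opow_omega0 :
    lift.{v} ((ω : Ordinal.{u}) ^ (ω : Ordinal.{u})) = ω ^ (ω : Ordinal.{max u v}) := by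
  refine eq_of_forall_lt_iff fun c => ?_
  simp only [lt_lift_iff, lt_omega0_opow_omega0_iff]
  constructor
  · rintro ⟨a, ⟨k, hk⟩, rfl⟩
    exact ⟨k, by rwa [← lift_omega0_pow.{u, v}, lift_lt]⟩
  · rintro ⟨k, hk⟩
    rw [← lift_omega0_pow.{u, v}] at hk
    obtain ⟨a, ha, rfl⟩ := lt_lift_iff.1 hk
    exact ⟨a, ⟨k, ha⟩, rfl⟩

theorem exists_htype_eq_of_lt {b : Ordinal.{u}} (hb : b < ω ^ (ω : Ordinal.{u}) + ω ^ ω) :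
    ∃ c : Ordinal.{v}, c < ω ^ (ω : Ordinal.{v}) + ω ^ ω ∧ ∀ n, htype n b = htype n c := by
  have h : lift.{v} b < lift.{u} (ω ^ (ω : Ordinal.{v}) + ω ^ ω) := by
    rw [lift_add, lift_omega0_opow_omega0.{v, u}]
    have := lift_lt.{v, u}.2 hb
    rwa [lift_add, lift_omega0_opow_omega0.{u, v}] at this
  obtain ⟨c, hc, hcb⟩ := lt_lift_iff.1 h
  exact ⟨c, hc, fun n => by rw [← htype_lift.{u, v} n b, ← hcb, htype_lift]⟩

/-- The intervals `[o i, o i + c i)` partition the ordinal `a` in increasing order. -/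
structure IsPartition {I : Type*} [LinearOrder I] (o c : I → Ordinal) (a : Ordinal) : Prop where
  add_le : ∀ i, o i + c i ≤ a
  add_le_of_lt : ∀ {i j}, i < j → o i + c i ≤ o j
  exists_mem : ∀ x < a, ∃ i, o i ≤ x ∧ x < o i + c i

theorem IsPartition.isOrderedSum {I : Type*} [LinearOrder I] {o c : I → Ordinal} {a : Ordinal}
    (h : IsPartition o c a) :
    IsOrderedSum (fun i (x : Set.Iio (c i)) => (⟨o i + x.1,
      ((add_lt_add_iff_left _).2 x.2).trans_le (h.add_le i)⟩ : Set.Iio a)) where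
  strictMono i x y hxy := (add_lt_add_iff_left (o i)).2 hxy
  lt_of_lt {i j} hij x y := by
    change o i + x.1 < o j + y.1
    calc o i + x.1 < o i + c i := (add_lt_add_iff_left _).2 x.2
      _ ≤ o j := h.add_le_of_lt hij
      _ ≤ o j + y.1 := le_self_add
  surj x := by
    obtain ⟨i, h₁, h₂⟩ := h.exists_mem x.1 x.2
    refine ⟨i, ⟨x.1 - o i, ?_⟩, Subtype.ext (Ordinal.add_sub_cancel_of_le h₁)⟩
    rw [Set.mem_Iio, ← add_lt_add_iff_left (o i), Ordinal.add_sub_cancel_of_le h₁]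
    exact h₂

theorem IsPartition.htype_eq {I : Type*} [LinearOrder I] {o c o' c' : I → Ordinal}
    {a a' : Ordinal} (h : IsPartition o c a) (h' : IsPartition o' c' a') {n : ℕ}
    (hc : ∀ i, htype n (c i) = htype n (c' i)) : htype n a = htype n a' := by
  refine h.isOrderedSum.htype_eq h'.isOrderedSum fun i => ?_
  convert hc i using 1 <;>
  · unfold htype
    congr 1
    funext j
    exact j.elim0

theorem isPartition_add (a b : Ordinal) :
    IsPartition (fun i : Bool => bif i then a else 0) (fun i => bif i then b else a) (a + b) where
  add_le i := by cases i <;> simp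
  add_le_of_lt {i j} hij := by
    obtain ⟨rfl, rfl⟩ := Bool.lt_iff.1 hij
    simp
  exists_mem x hx := by
    rcases lt_or_ge x a with h | h
    · exact ⟨false, by simpa using h⟩
    · exact ⟨true, by simpa using ⟨h, hx⟩⟩

theorem htype_add_congr {n : ℕ} {a a' b b' : Ordinal} (ha : htype n a = htype n a')
    (hb : htype n b = htype n b') : htype n (a + b) = htype n (a' + b') :=
  (isPartition_add a b).htype_eq (isPartition_add a' b') fun i => by cases i <;> simpa

theorem isPartition_nat {f : ℕ → Ordinal} {a : Ordinal} (hf : Monotone f) (h₀ : f 0 = 0)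
    (hle : ∀ k, f k ≤ a) (hlt : ∀ x < a, ∃ k, x < f k) :
    IsPartition f (fun k => f (k + 1) - f k) a := by
  have hadd : ∀ k, f k + (f (k + 1) - f k) = f (k + 1) := fun k =>
    Ordinal.add_sub_cancel_of_le (hf k.le_succ)
  refine ⟨fun k => (hadd k).trans_le (hle _), fun {i j} hij => (hadd i).trans_le (hf hij),
    fun x hx => ?_⟩
  classical
  have hex := hlt x hx
  obtain ⟨k, hk⟩ : ∃ k, Nat.find hex = k + 1 := by
    refine Nat.exists_eq_succ_of_ne_zero fun h => ?_
    have := Nat.find_spec hex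
    rw [h, h₀] at this
    exact not_lt_zero this
  refine ⟨k, not_lt.1 (Nat.find_min hex (hk ▸ k.lt_succ_self)), ?_⟩
  rw [hadd, ← hk]
  exact Nat.find_spec hex

theorem isPartition_mul_omega0 (a : Ordinal) :
    IsPartition (fun k : ℕ => a * k) (fun _ => a) (a * ω) where
  add_le k := by
    rw [← mul_add_one]
    exact mul_le_mul_right (by exact_mod_cast (natCast_lt_omega0 (k + 1)).le) a
  add_le_of_lt {i j} hij := by
    rw [← mul_add_one]
    exact mul_le_mul_right (by exact_mod_cast hij) a
  exists_mem x hx := by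
    have ha : a ≠ 0 := by
      rintro rfl
      simp at hx
    obtain ⟨k, hk⟩ := lt_omega0.1 ((lt_mul_iff_div_lt ha).1 hx)
    refine ⟨k, ?_, ?_⟩
    · rw [← hk]
      exact mul_div_le x a
    · rw [← mul_add_one, ← hk]
      exact lt_mul_succ_div x ha

theorem htype_mul_omega0_congr {n : ℕ} {a a' : Ordinal} (h : htype n a = htype n a') :
    htype n (a * ω) = htype n (a' * ω) :=
  (isPartition_mul_omega0 a).htype_eq (isPartition_mul_omega0 a') fun _ => h

theorem exists_htype_omega0_pow_eq_succ (n : ℕ) :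
    ∃ m : ℕ, htype n ((ω : Ordinal.{u}) ^ m) = htype n ((ω : Ordinal.{u}) ^ (m + 1)) := by
  have := HType.finite n 0
  obtain ⟨p, q, hpq, h⟩ : ∃ p q : ℕ, p < q ∧
      htype n ((ω : Ordinal.{u}) ^ p) = htype n ((ω : Ordinal.{u}) ^ q) := by
    obtain ⟨p, q, hne, h⟩ := Finite.exists_ne_map_eq_of_infinite
      fun k : ℕ => htype n ((ω : Ordinal.{u}) ^ k)
    rcases lt_or_gt_of_ne hne with hlt | hlt
    exacts [⟨p, q, hlt, h⟩, ⟨q, p, hlt, h.symm⟩]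
  obtain rfl | hlt := (Nat.succ_le_of_lt hpq).eq_or_lt
  · exact ⟨p, h⟩
  have absorb : ∀ {i j : ℕ}, i < j → (ω : Ordinal.{u}) ^ i + ω ^ j = ω ^ j := by
    intro i j hij
    rw [← opow_natCast, ← opow_natCast]
    exact add_omega0_opow ((opow_lt_opow_iff_right one_lt_omega0).2 (by exact_mod_cast hij))
  refine ⟨p + 1, ?_⟩
  have h₁ : htype n ((ω : Ordinal.{u}) ^ (p + 1) + ω ^ p) = htype n ((ω : Ordinal.{u}) ^ p) := by
    rw [htype_add_congr rfl h, absorb hlt, h]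
  have h₂ := htype_mul_omega0_congr h₁
  rw [add_mul_of_isSuccLimit (absorb p.lt_succ_self) isSuccLimit_omega0, ← pow_succ,
    ← pow_succ] at h₂
  exact h₂.symm

theorem htype_omega0_opow_omega0_mul_omega0 (n : ℕ) :
    htype n ((ω : Ordinal.{u}) ^ ω * ω) = htype n ((ω : Ordinal.{u}) ^ ω) := by
  obtain ⟨m, hm⟩ := exists_htype_omega0_pow_eq_succ.{u} n
  have hconst : ∀ k : ℕ, htype n ((ω : Ordinal.{u}) ^ (m + k)) = htype n ((ω : Ordinal.{u}) ^ m) := by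
    intro k
    induction k with
    | zero => rfl
    | succ k ih => rw [← add_assoc, pow_succ, htype_mul_omega0_congr ih, ← pow_succ, hm]
  let f : ℕ → Ordinal.{u} := fun k => k.casesOn 0 fun k => ω ^ (m + k)
  have hlt : ∀ k, f k < f (k + 1) := by
    rintro (_ | k)
    · exact pow_pos omega0_pos _
    · exact pow_lt_pow_right₀ one_lt_omega0 (Nat.lt_succ_self _)
  have hpart : IsPartition f (fun k => f (k + 1) - f k) (ω ^ ω) := by
    refine isPartition_nat (strictMono_nat_of_lt_succ hlt).monotone rfl ?_ ?_
    · rintro (_ | k)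
      · exact zero_le
      · change ω ^ (m + k) ≤ _
        rw [← opow_natCast]
        exact opow_le_opow_right omega0_pos (natCast_lt_omega0 _).le
    · intro x hx
      obtain ⟨k, hk⟩ := lt_omega0_opow_omega0_iff.1 hx
      refine ⟨k + 1, hk.trans_le ?_⟩
      exact pow_le_pow_right₀ one_lt_omega0.le (Nat.le_add_left _ _)
  have hdiff : ∀ k, f (k + 1) - f k = ω ^ (m + k) := by
    rintro (_ | k)
    · exact Ordinal.sub_zero _
    · refine sub_eq_of_add_eq ?_
      change ω ^ (m + k) + ω ^ (m + (k + 1)) = ω ^ (m + (k + 1))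
      rw [← opow_natCast, ← opow_natCast]
      exact add_omega0_opow ((opow_lt_opow_iff_right one_lt_omega0).2
        (by exact_mod_cast Nat.lt_succ_self (m + k)))
  have key : htype n ((ω : Ordinal.{u}) ^ ω) = htype n ((ω : Ordinal.{u}) ^ m) := by
    rw [hm, pow_succ]
    refine hpart.htype_eq (isPartition_mul_omega0 _) fun k => ?_
    rw [hdiff, hconst]
  rw [htype_mul_omega0_congr key, key, ← pow_succ, hm]

theorem exists_nat_cofinal {a : Ordinal} (ha : Order.IsSuccLimit a)
    (hc : a < (Cardinal.aleph 1).ord) :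
    ∃ f : ℕ → Ordinal, StrictMono f ∧ f 0 = 0 ∧ (∀ k, f k < a) ∧ ∀ x < a, ∃ k, x < f k := by
  have : Countable (Set.Iio a) := by
    rw [← Cardinal.mk_le_aleph0_iff, Cardinal.mk_Iio_ordinal, Cardinal.lift_le_aleph0,
      ← Cardinal.lt_aleph_one_iff]
    exact Cardinal.lt_ord.1 hc
  have : Nonempty (Set.Iio a) := ⟨⟨0, ha.bot_lt⟩⟩
  obtain ⟨g, hg⟩ := exists_surjective_nat (Set.Iio a)
  let f : ℕ → Set.Iio a := fun k => k.rec ⟨0, ha.bot_lt⟩ fun k x =>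
    ⟨max x.1 (g k).1 + 1, ha.add_one_lt (max_lt x.2 (g k).2)⟩
  refine ⟨fun k => (f k).1, strictMono_nat_of_lt_succ fun k => ?_, rfl, fun k => (f k).2,
    fun x hx => ?_⟩
  · exact (le_max_left _ _).trans_lt (lt_add_one _)
  · obtain ⟨k, hk⟩ := hg ⟨x, hx⟩
    have hxk : (g k).1 = x := congrArg Subtype.val hk
    exact ⟨k + 1, hxk.symm.trans_le (le_max_right (f k).1 _) |>.trans_lt (lt_add_one _)⟩

theorem htype_omega0_opow_omega0_mul (n : ℕ) (a : Ordinal.{u}) (ha : a < (Cardinal.aleph 1).ord)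
    (h₁ : 1 ≤ a) : htype n (ω ^ ω * a) = htype n ((ω : Ordinal.{u}) ^ ω) := by
  have hω := htype_omega0_opow_omega0_mul_omega0.{u} n
  have hadd : htype n (ω ^ ω + ω ^ ω) = htype n ((ω : Ordinal.{u}) ^ ω) := by
    rw [← htype_add_congr rfl hω, ← mul_one_add, one_add_omega0, hω]
  induction a using limitRecOn with
  | zero => exact absurd h₁ (by simp)
  | add_one a ih =>
    obtain rfl | h := eq_or_ne a 0
    · rw [zero_add, mul_one]
    · rw [mul_add_one, htype_add_congr (ih ((lt_add_one a).trans ha)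
        (Order.one_le_iff_ne_zero.2 h)) rfl, hadd]
  | limit a hlim ih =>
    obtain ⟨f, hmono, h₀, hlt, hcof⟩ := exists_nat_cofinal hlim ha
    have hpart : IsPartition (fun k => ω ^ ω * f k)
        (fun k => ω ^ ω * f (k + 1) - ω ^ ω * f k) (ω ^ ω * a) := by
      refine isPartition_nat (fun i j hij => mul_le_mul_right (hmono.monotone hij) _)
        (by simp [h₀]) (fun k => mul_le_mul_right (hlt k).le _) fun x hx => ?_
      obtain ⟨c, hc, hxc⟩ := (lt_mul_iff_of_isSuccLimit hlim).1 hx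
      obtain ⟨k, hk⟩ := hcof c hc
      exact ⟨k, hxc.trans_le (mul_le_mul_right hk.le _)⟩
    rw [← hω]
    refine hpart.htype_eq (isPartition_mul_omega0 _) fun k => ?_
    rw [← mul_sub]
    have hle : f (k + 1) - f k < a := (sub_le_self _ _).trans_lt (hlt _)
    exact ih _ hle (hle.trans ha)
      (Order.one_le_iff_ne_zero.2 (Ordinal.sub_ne_zero_iff_lt.2 (hmono k.lt_succ_self)))

end Ordinal

/-- (Shelah, Thm 3.5(C) for `λ = ω`.) Every countable ordinal `α` has the same monadic
theory as some `β < ω^ω + ω^ω`; concretely, writing `α = ω^ω·α₁ + α₂` with `α₂ < ω^ω`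
and `α₁ ≥ 1`, the ordinal `ω^ω + α₂` has the same monadic theory as `α`. -/
theorem countable_ordinal_monadically_equiv_small
    (α : Ordinal) (hα : α < (Cardinal.aleph 1).ord) :
    (∃ β : Ordinal,
        β < Ordinal.omega0 ^ Ordinal.omega0 + Ordinal.omega0 ^ Ordinal.omega0 ∧
        OrdMSOEquiv α β) ∧
    (∀ α₁ α₂ : Ordinal,
        α = Ordinal.omega0 ^ Ordinal.omega0 * α₁ + α₂ →
        α₂ < Ordinal.omega0 ^ Ordinal.omega0 → 1 ≤ α₁ →
        OrdMSOEquiv α (Ordinal.omega0 ^ Ordinal.omega0 + α₂)) := by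
  have key : ∀ α₁ α₂ : Ordinal, α = Ordinal.omega0 ^ Ordinal.omega0 * α₁ + α₂ → 1 ≤ α₁ →
      ∀ n, α.htype n = (Ordinal.omega0 ^ Ordinal.omega0 + α₂).htype n := by
    rintro α₁ α₂ rfl h₁ n
    have hlt : α₁ < (Cardinal.aleph 1).ord :=
      ((Ordinal.le_mul_right _ (Ordinal.opow_pos _ Ordinal.omega0_pos)).trans
        le_self_add).trans_lt hα
    exact Ordinal.htype_add_congr (Ordinal.htype_omega0_opow_omega0_mul n α₁ hlt h₁) rfl
  refine ⟨?_, fun α₁ α₂ h _ h₁ => Ordinal.ordMSOEquiv_of_htype_eq (key α₁ α₂ h h₁)⟩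
  obtain ⟨β, hβ, h⟩ : ∃ β < Ordinal.omega0 ^ Ordinal.omega0 + Ordinal.omega0 ^ Ordinal.omega0,
      ∀ n, α.htype n = β.htype n := by
    have hne := (Ordinal.opow_pos Ordinal.omega0 Ordinal.omega0_pos).ne'
    rcases lt_or_ge α (Ordinal.omega0 ^ Ordinal.omega0) with h | h
    · exact ⟨α, h.trans_le le_self_add, fun _ => rfl⟩
    · refine ⟨Ordinal.omega0 ^ Ordinal.omega0 + α % Ordinal.omega0 ^ Ordinal.omega0,
        (add_lt_add_iff_left _).2 (Ordinal.mod_lt _ hne),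
        key (α / Ordinal.omega0 ^ Ordinal.omega0) _ (Ordinal.div_add_mod _ _).symm ?_⟩
      rwa [← Ordinal.mul_le_iff_le_div hne, mul_one]
  -- the existential in the goal ranges over ordinals of another universe
  obtain ⟨γ, hγ, hβγ⟩ := Ordinal.exists_htype_eq_of_lt hβ
  exact ⟨γ, hγ, Ordinal.ordMSOEquiv_of_htype_eq fun n => (h n).trans (hβγ n)⟩
end

section
/- Let N be a dense linear order such that neither ω₁ nor its reverse ω₁* embeds into N, let I ⊆ N be a dense subset, and suppose there is a fixed value t₀ such that the monadic n-theory Th^n((N,P̄)↾[a,b)) equals t₀ for all a < b in I. Then there is a value t₁ such that for every convex subset J of N with no first and no last element, Th^n((N,P̄)↾J) = t₁; in particular all open intervals (a,b) of N have the same monadic n-theory t₁, namely t₁ = Σ_{n∈ℤ} t₀. -/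
/-- The unary predicates `P` restricted to a subset `S`. -/
def restrictPred {N : Type} {m : ℕ} (P : Fin m → Set N) (S : Set N) : Fin m → Set ↥S :=
  fun i => {x : ↥S | (x : N) ∈ P i}

/-- The back-and-forth relation of length `n` between the substructures on `D` and `D'`, where
`R` is the set of pairs of elements, and `S` the set of pairs of sets, chosen so far. -/
def BackForth {α β : Type*} [LinearOrder α] [LinearOrder β] (D : Set α) (D' : Set β) :
    ℕ → Set (α × β) → Set (Set α × Set β) → Prop
  | 0, R, S => ∀ r ∈ R,
      (∀ q ∈ R, (r.1 < q.1 ↔ r.2 < q.2) ∧ (r.1 = q.1 ↔ r.2 = q.2)) ∧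
      ∀ q ∈ S, (r.1 ∈ q.1 ↔ r.2 ∈ q.2)
  | n + 1, R, S =>
      (∀ a ∈ D, ∃ b ∈ D', BackForth D D' n (insert (a, b) R) S) ∧
      (∀ b ∈ D', ∃ a ∈ D, BackForth D D' n (insert (a, b) R) S) ∧
      (∀ A, ∃ B, BackForth D D' n R (insert (A, B) S)) ∧
      (∀ B, ∃ A, BackForth D D' n R (insert (A, B) S))

namespace BackForth

section

variable {α β : Type*} [LinearOrder α] [LinearOrder β]

/-- Only the traces of the chosen sets on the two domains matter. -/
theorem congr {D : Set α} {D' : Set β} {n : ℕ} : ∀ {R R' : Set (α × β)}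
    {S S' : Set (Set α × Set β)}, BackForth D D' n R S →
    (∀ r ∈ R', r ∈ R ∧ r.1 ∈ D ∧ r.2 ∈ D') →
    (∀ q ∈ S', ∃ p ∈ S, (∀ x ∈ D, x ∈ q.1 ↔ x ∈ p.1) ∧ ∀ x ∈ D', x ∈ q.2 ↔ x ∈ p.2) →
    BackForth D D' n R' S' := by
  induction n with
  | zero =>
    intro R R' S S' h hR hS r hr
    obtain ⟨hr, hr1, hr2⟩ := hR r hr
    refine ⟨fun q hq => (h r hr).1 q (hR q hq).1, fun q hq => ?_⟩
    obtain ⟨p, hp, hp1, hp2⟩ := hS q hq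
    rw [hp1 _ hr1, hp2 _ hr2]
    exact (h r hr).2 p hp
  | succ n ih =>
    intro R R' S S' h hR hS
    have elem : ∀ a ∈ D, ∀ b ∈ D', BackForth D D' n (insert (a, b) R) S →
        BackForth D D' n (insert (a, b) R') S' := by
      intro a ha b hb h
      refine ih h ?_ hS
      rintro r (rfl | hr)
      · exact ⟨Set.mem_insert _ _, ha, hb⟩
      · exact ⟨Set.mem_insert_of_mem _ (hR r hr).1, (hR r hr).2⟩
    have set : ∀ A B, BackForth D D' n R (insert (A, B) S) →
        BackForth D D' n R' (insert (A, B) S') := by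
      intro A B h
      refine ih h hR ?_
      rintro q (rfl | hq)
      · exact ⟨_, Set.mem_insert _ _, by simp, by simp⟩
      · obtain ⟨p, hp, h⟩ := hS q hq
        exact ⟨p, Set.mem_insert_of_mem _ hp, h⟩
    obtain ⟨h1, h2, h3, h4⟩ := h
    refine ⟨fun a ha => ?_, fun b hb => ?_, fun A => ?_, fun B => ?_⟩
    · obtain ⟨b, hb, h⟩ := h1 a ha
      exact ⟨b, hb, elem a ha b hb h⟩
    · obtain ⟨a, ha, h⟩ := h2 b hb
      exact ⟨a, ha, elem a ha b hb h⟩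
    · obtain ⟨B, h⟩ := h3 A
      exact ⟨B, set A B h⟩
    · obtain ⟨A, h⟩ := h4 B
      exact ⟨A, set A B h⟩

theorem of_succ {D : Set α} {D' : Set β} {n : ℕ} {R R' : Set (α × β)}
    {S : Set (Set α × Set β)} (h : BackForth D D' (n + 1) R S)
    (hR : ∀ r ∈ R', r ∈ R ∧ r.1 ∈ D ∧ r.2 ∈ D') : BackForth D D' n R' S := by
  obtain ⟨B, h⟩ := h.2.2.1 ∅
  exact h.congr hR fun q hq => ⟨q, Set.mem_insert_of_mem _ hq, by simp, by simp⟩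

theorem atomic {D : Set α} {D' : Set β} {n : ℕ} {R : Set (α × β)}
    {S : Set (Set α × Set β)} (h : BackForth D D' n R S)
    (hR : ∀ r ∈ R, r.1 ∈ D ∧ r.2 ∈ D') : BackForth D D' 0 R S := by
  induction n with
  | zero => exact h
  | succ n ih => exact ih (h.of_succ fun r hr => ⟨hr, hR r hr⟩)

/-- The part of a set of pairs lying in `D × E`. -/
def localPairs (D : Set α) (E : Set β) (R : Set (α × β)) : Set (α × β) :=
  {r ∈ R | r.1 ∈ D ∧ r.2 ∈ E}

/-- Additivity over ordered sums. -/
theorem sum {ι : Type*} [LinearOrder ι] {D : ι → Set α} {D' : ι → Set β}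
    (hD : ∀ i j, i < j → ∀ x ∈ D i, ∀ y ∈ D j, x < y)
    (hD' : ∀ i j, i < j → ∀ x ∈ D' i, ∀ y ∈ D' j, x < y) {n : ℕ} :
    ∀ {R : Set (α × β)} {S : Set (Set α × Set β)},
    (∀ r ∈ R, ∃ i, r.1 ∈ D i ∧ r.2 ∈ D' i) →
    (∀ i, BackForth (D i) (D' i) n (localPairs (D i) (D' i) R) S) →
    BackForth (⋃ i, D i) (⋃ i, D' i) n R S := by
  have uniq : ∀ i j x, x ∈ D i → x ∈ D j → i = j := by
    intro i j x hi hj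
    rcases lt_trichotomy i j with h | h | h
    · exact absurd (hD _ _ h _ hi _ hj) (lt_irrefl _)
    · exact h
    · exact absurd (hD _ _ h _ hj _ hi) (lt_irrefl _)
  have uniq' : ∀ i j x, x ∈ D' i → x ∈ D' j → i = j := by
    intro i j x hi hj
    rcases lt_trichotomy i j with h | h | h
    · exact absurd (hD' _ _ h _ hi _ hj) (lt_irrefl _)
    · exact h
    · exact absurd (hD' _ _ h _ hj _ hi) (lt_irrefl _)
  induction n with
  | zero =>
    intro R S hR h r hr
    obtain ⟨i, hi, hi'⟩ := hR r hr
    refine ⟨fun q hq => ?_, (h i r ⟨hr, hi, hi'⟩).2⟩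
    obtain ⟨j, hj, hj'⟩ := hR q hq
    rcases lt_trichotomy i j with hij | rfl | hij
    · have h1 := hD _ _ hij _ hi _ hj
      have h2 := hD' _ _ hij _ hi' _ hj'
      simp [h1, h2, h1.ne, h2.ne]
    · exact (h i r ⟨hr, hi, hi'⟩).1 q ⟨hq, hj, hj'⟩
    · have h1 := hD _ _ hij _ hj _ hi
      have h2 := hD' _ _ hij _ hj' _ hi'
      simp [h1.not_gt, h2.not_gt, h1.ne', h2.ne']
  | succ n ih =>
    intro R S hR h
    have elem : ∀ i, ∀ a ∈ D i, ∀ b ∈ D' i,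
        BackForth (D i) (D' i) n (insert (a, b) (localPairs (D i) (D' i) R)) S →
        BackForth (⋃ i, D i) (⋃ i, D' i) n (insert (a, b) R) S := by
      intro i a ha b hb hab
      refine ih ?_ fun j => ?_
      · rintro r (rfl | hr)
        · exact ⟨i, ha, hb⟩
        · exact hR r hr
      · by_cases hij : i = j
        · subst hij
          refine hab.congr ?_ fun q hq => ⟨q, hq, by simp, by simp⟩
          rintro r ⟨rfl | hr, hr'⟩
          · exact ⟨Set.mem_insert _ _, hr'⟩
          · exact ⟨Set.mem_insert_of_mem _ ⟨hr, hr'⟩, hr'⟩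
        · refine (h j).of_succ ?_
          rintro r ⟨rfl | hr, hr'⟩
          · exact absurd (uniq _ _ _ ha hr'.1) hij
          · exact ⟨⟨hr, hr'⟩, hr'⟩
    have set : ∀ A B (A' : ι → Set α) (B' : ι → Set β),
        (∀ i, ∀ x ∈ D i, x ∈ A ↔ x ∈ A' i) → (∀ i, ∀ x ∈ D' i, x ∈ B ↔ x ∈ B' i) →
        (∀ i, BackForth (D i) (D' i) n (localPairs (D i) (D' i) R) (insert (A' i, B' i) S)) →
        BackForth (⋃ i, D i) (⋃ i, D' i) n R (insert (A, B) S) := by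
      intro A B A' B' hA hB hAB
      refine ih hR fun i => (hAB i).congr (fun r hr => ⟨hr, hr.2⟩) ?_
      rintro q (rfl | hq)
      · exact ⟨_, Set.mem_insert _ _, hA i, hB i⟩
      · exact ⟨q, Set.mem_insert_of_mem _ hq, by simp, by simp⟩
    refine ⟨fun a ha => ?_, fun b hb => ?_, fun A => ?_, fun B => ?_⟩
    · obtain ⟨i, ha⟩ := Set.mem_iUnion.1 ha
      obtain ⟨b, hb, hab⟩ := (h i).1 a ha
      exact ⟨b, Set.mem_iUnion_of_mem i hb, elem i a ha b hb hab⟩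
    · obtain ⟨i, hb⟩ := Set.mem_iUnion.1 hb
      obtain ⟨a, ha, hab⟩ := (h i).2.1 b hb
      exact ⟨a, Set.mem_iUnion_of_mem i ha, elem i a ha b hb hab⟩
    · choose B' hB' using fun i => (h i).2.2.1 A
      refine ⟨{x | ∃ i, x ∈ D' i ∧ x ∈ B' i}, set A _ (fun _ => A) B' (by simp) ?_ hB'⟩
      refine fun i x hx => ⟨?_, fun h => ⟨i, hx, h⟩⟩
      rintro ⟨j, hj, h⟩
      exact uniq' _ _ _ hj hx ▸ h
    · choose A' hA' using fun i => (h i).2.2.2 B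
      refine ⟨{x | ∃ i, x ∈ D i ∧ x ∈ A' i}, set _ B A' (fun _ => B) ?_ (by simp) hA'⟩
      refine fun i x hx => ⟨?_, fun h => ⟨i, hx, h⟩⟩
      rintro ⟨j, hj, h⟩
      exact uniq _ _ _ hj hx ▸ h

end

/-- Back-and-forth equivalence of length `n` preserves formulas of depth at most `n`. -/
theorem sat_iff {N : Type} [LinearOrder N] {m : ℕ} {P : Fin m → Set N} {D D' : Set N}
    {k l : ℕ} (φ : MSO m k l) : ∀ {n : ℕ}, φ.depth ≤ n →
    ∀ {R : Set (N × N)} {S : Set (Set N × Set N)}, BackForth D D' n R S →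
    (∀ r ∈ R, r.1 ∈ D ∧ r.2 ∈ D') → (∀ p, (P p, P p) ∈ S) →
    ∀ (e : Fin k → D) (e' : Fin k → D') (s : Fin l → Set D) (s' : Fin l → Set D'),
    (∀ i, ((e i : N), (e' i : N)) ∈ R) →
    (∀ i, ∃ q ∈ S, s i = Subtype.val ⁻¹' q.1 ∧ s' i = Subtype.val ⁻¹' q.2) →
    (φ.Sat (restrictPred P D) e s ↔ φ.Sat (restrictPred P D') e' s') := by
  induction φ with
  | lt i j =>
    intro n _ R S h hR hP e e' s s' he hs
    exact ((h.atomic hR _ (he i)).1 _ (he j)).1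
  | eq i j =>
    intro n _ R S h hR hP e e' s s' he hs
    simpa [MSO.Sat, Subtype.ext_iff] using ((h.atomic hR _ (he i)).1 _ (he j)).2
  | mem i X =>
    intro n _ R S h hR hP e e' s s' he hs
    obtain ⟨q, hq, h1, h2⟩ := hs X
    simpa [MSO.Sat, h1, h2] using (h.atomic hR _ (he i)).2 q hq
  | pred p i =>
    intro n _ R S h hR hP e e' s s' he hs
    exact (h.atomic hR _ (he i)).2 _ (hP p)
  | not φ ih =>
    intro n hn R S h hR hP e e' s s' he hs
    exact not_congr (ih hn h hR hP e e' s s' he hs)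
  | and φ ψ ih1 ih2 =>
    intro n hn R S h hR hP e e' s s' he hs
    exact and_congr (ih1 (le_trans (le_max_left _ _) hn) h hR hP e e' s s' he hs)
      (ih2 (le_trans (le_max_right _ _) hn) h hR hP e e' s s' he hs)
  | exElem φ ih =>
    intro n hn R S h hR hP e e' s s' he hs
    obtain _ | n := n
    · exact absurd hn (Nat.not_succ_le_zero _)
    have step : ∀ (a : D) (b : D'), BackForth D D' n (insert ((a : N), (b : N)) R) S →
        (φ.Sat (restrictPred P D) (Fin.cons a e) s ↔
          φ.Sat (restrictPred P D') (Fin.cons b e') s') := by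
      intro a b hab
      refine ih (Nat.le_of_succ_le_succ hn) hab ?_ hP _ _ _ _ ?_ hs
      · rintro r (rfl | hr)
        exacts [⟨a.2, b.2⟩, hR r hr]
      · refine Fin.cases ?_ fun i => ?_
        · simp
        · simpa using Or.inr (he i)
    constructor
    · rintro ⟨a, ha⟩
      obtain ⟨b, hb, hab⟩ := h.1 a a.2
      exact ⟨⟨b, hb⟩, (step a ⟨b, hb⟩ hab).1 ha⟩
    · rintro ⟨b, hb⟩
      obtain ⟨a, ha, hab⟩ := h.2.1 b b.2
      exact ⟨⟨a, ha⟩, (step ⟨a, ha⟩ b hab).2 hb⟩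
  | exSet φ ih =>
    intro n hn R S h hR hP e e' s s' he hs
    obtain _ | n := n
    · exact absurd hn (Nat.not_succ_le_zero _)
    have step : ∀ A B : Set N, BackForth D D' n R (insert (A, B) S) →
        (φ.Sat (restrictPred P D) e (Fin.cons (Subtype.val ⁻¹' A) s) ↔
          φ.Sat (restrictPred P D') e' (Fin.cons (Subtype.val ⁻¹' B) s')) := by
      intro A B hAB
      refine ih (Nat.le_of_succ_le_succ hn) hAB hR (fun p => Set.mem_insert_of_mem _ (hP p))
        _ _ _ _ he ?_
      refine Fin.cases ⟨_, Set.mem_insert _ _, rfl, rfl⟩ fun i => ?_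
      obtain ⟨q, hq, h1, h2⟩ := hs i
      exact ⟨q, Set.mem_insert_of_mem _ hq, by simpa using h1, by simpa using h2⟩
    constructor
    · rintro ⟨A, hA⟩
      obtain ⟨B, hAB⟩ := h.2.2.1 (Subtype.val '' A)
      refine ⟨_, (step _ B hAB).1 ?_⟩
      rwa [Set.preimage_image_eq _ Subtype.val_injective]
    · rintro ⟨B, hB⟩
      obtain ⟨A, hAB⟩ := h.2.2.2 (Subtype.val '' B)
      refine ⟨_, (step A _ hAB).2 ?_⟩
      rwa [Set.preimage_image_eq _ Subtype.val_injective]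

end BackForth

namespace MSO

/-- Finitely many formulas of depth at most `n` decide, each on its own, every formula of a given
finite set of formulas of depth at most `n`. -/
theorem exists_finite_complete {m k l n : ℕ} {Φ : Set (MSO m k l)} (hΦ : Φ.Finite)
    (hdepth : ∀ φ ∈ Φ, φ.depth ≤ n) (ψ : MSO m k l) (hψ : ψ.depth ≤ n) :
    ∃ C : Set (MSO m k l), C.Finite ∧ (∀ χ ∈ C, χ.depth ≤ n) ∧
      ∀ (α : Type) [LinearOrder α] (P : Fin m → Set α) (e : Fin k → α) (s : Fin l → Set α),
        ∃ χ ∈ C, χ.Sat P e s ∧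
          ∀ (β : Type) [LinearOrder β] (P' : Fin m → Set β) (e' : Fin k → β)
            (s' : Fin l → Set β), χ.Sat P' e' s' → ∀ φ ∈ Φ, (φ.Sat P e s ↔ φ.Sat P' e' s') := by
  induction Φ, hΦ using Set.Finite.induction_on with
  | empty =>
    refine ⟨{.not (.and ψ (.not ψ))}, Set.finite_singleton _, ?_, fun α _ P e s =>
      ⟨_, rfl, ?_, by simp⟩⟩
    · simpa [depth] using hψ
    · simp [Sat]
  | @insert φ Φ _ _ ih =>
    obtain ⟨C, hC, hCd, h⟩ := ih fun φ hφ => hdepth φ (Set.mem_insert_of_mem _ hφ)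
    have hφ := hdepth φ (Set.mem_insert _ _)
    refine ⟨(fun χ => .and χ φ) '' C ∪ (fun χ => .and χ (.not φ)) '' C,
      (hC.image _).union (hC.image _), ?_, fun α _ P e s => ?_⟩
    · rintro _ (⟨χ, hχ, rfl⟩ | ⟨χ, hχ, rfl⟩) <;> exact max_le (hCd χ hχ) hφ
    · obtain ⟨χ, hχ, hsat, hχ'⟩ := h α P e s
      by_cases hs : φ.Sat P e s
      · refine ⟨_, Or.inl ⟨χ, hχ, rfl⟩, ⟨hsat, hs⟩, fun β _ P' e' s' hand => ?_⟩
        rintro φ (rfl | hφ)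
        exacts [iff_of_true hs hand.2, hχ' β P' e' s' hand.1 φ hφ]
      · refine ⟨_, Or.inr ⟨χ, hχ, rfl⟩, ⟨hsat, hs⟩, fun β _ P' e' s' hand => ?_⟩
        rintro φ (rfl | hφ)
        exacts [iff_of_false hs hand.2, hχ' β P' e' s' hand.1 φ hφ]

/-- Finitely many formulas of depth at most `n` determine back-and-forth equivalence of
length `n`. -/
theorem exists_finite_backForth {N : Type} [LinearOrder N] {m : ℕ} (P : Fin m → Set N) (n : ℕ) :
    ∀ k l : ℕ, ∃ Φ : Set (MSO m k l), Φ.Finite ∧ (∀ φ ∈ Φ, φ.depth ≤ n) ∧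
      ∀ (D D' : Set N) (e : Fin k → D) (e' : Fin k → D') (s : Fin l → Set D)
        (s' : Fin l → Set D'),
        (∀ φ ∈ Φ, (φ.Sat (restrictPred P D) e s ↔ φ.Sat (restrictPred P D') e' s')) →
        ∀ (R : Set (N × N)) (S : Set (Set N × Set N)),
        (∀ r ∈ R, ∃ i, r = ((e i : N), (e' i : N))) →
        (∀ q ∈ S, (∃ p, q = (P p, P p)) ∨
          ∃ i, s i = Subtype.val ⁻¹' q.1 ∧ s' i = Subtype.val ⁻¹' q.2) →
        BackForth D D' n R S := by
  induction n with
  | zero =>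
    intro k l
    refine ⟨Set.range (fun x : Fin k × Fin k => .lt x.1 x.2) ∪
      Set.range (fun x : Fin k × Fin k => .eq x.1 x.2) ∪
      Set.range (fun x : Fin k × Fin l => .mem x.1 x.2) ∪
      Set.range (fun x : Fin m × Fin k => .pred x.1 x.2), ?_, ?_, ?_⟩
    · exact (((Set.finite_range _).union (Set.finite_range _)).union
        (Set.finite_range _)).union (Set.finite_range _)
    · rintro _ (((⟨x, rfl⟩ | ⟨x, rfl⟩) | ⟨x, rfl⟩) | ⟨x, rfl⟩) <;> exact le_rfl
    · intro D D' e e' s s' h R S hR hS r hr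
      obtain ⟨i, rfl⟩ := hR r hr
      refine ⟨fun q hq => ?_, fun q hq => ?_⟩
      · obtain ⟨j, rfl⟩ := hR q hq
        refine ⟨h _ (Or.inl (Or.inl (Or.inl ⟨(i, j), rfl⟩))), ?_⟩
        simpa [Sat, Subtype.ext_iff] using h _ (Or.inl (Or.inl (Or.inr ⟨(i, j), rfl⟩)))
      · obtain ⟨p, rfl⟩ | ⟨X, h1, h2⟩ := hS q hq
        · exact h _ (Or.inr ⟨(p, i), rfl⟩)
        · simpa [Sat, h1, h2] using h _ (Or.inl (Or.inr ⟨(i, X), rfl⟩))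
  | succ n ih =>
    intro k l
    obtain ⟨Φ₁, hf₁, hd₁, h₁⟩ := ih (k + 1) l
    obtain ⟨Φ₂, hf₂, hd₂, h₂⟩ := ih k (l + 1)
    obtain ⟨C₁, hCf₁, hCd₁, hC₁⟩ := exists_finite_complete hf₁ hd₁ (.eq 0 0) (Nat.zero_le _)
    have hset : ∃ C : Set (MSO m k (l + 1)), C.Finite ∧ (∀ χ ∈ C, χ.depth ≤ n) ∧
        ∀ (D D' : Set N) (e : Fin k → D) (e' : Fin k → D') (s : Fin l → Set D)
          (s' : Fin l → Set D'),
        (∀ χ ∈ C, ((exSet χ).Sat (restrictPred P D) e s ↔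
          (exSet χ).Sat (restrictPred P D') e' s')) →
        (∀ A, ∃ B, ∀ φ ∈ Φ₂, (φ.Sat (restrictPred P D) e (Fin.cons A s) ↔
          φ.Sat (restrictPred P D') e' (Fin.cons B s'))) ∧
        (∀ B, ∃ A, ∀ φ ∈ Φ₂, (φ.Sat (restrictPred P D) e (Fin.cons A s) ↔
          φ.Sat (restrictPred P D') e' (Fin.cons B s'))) := by
      obtain rfl | ⟨ψ, hψ⟩ := Φ₂.eq_empty_or_nonempty
      · exact ⟨∅, Set.finite_empty, by simp, by simp⟩
      obtain ⟨C, hCf, hCd, hC⟩ := exists_finite_complete hf₂ hd₂ ψ (hd₂ ψ hψ)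
      refine ⟨C, hCf, hCd, fun D D' e e' s s' h => ⟨fun A => ?_, fun B => ?_⟩⟩
      · obtain ⟨χ, hχ, hsat, hχ'⟩ := hC _ (restrictPred P D) e (Fin.cons A s)
        obtain ⟨B, hB⟩ := (h χ hχ).1 ⟨A, hsat⟩
        exact ⟨B, hχ' _ _ _ _ hB⟩
      · obtain ⟨χ, hχ, hsat, hχ'⟩ := hC _ (restrictPred P D') e' (Fin.cons B s')
        obtain ⟨A, hA⟩ := (h χ hχ).2 ⟨B, hsat⟩
        exact ⟨A, fun φ hφ => (hχ' _ _ _ _ hA φ hφ).symm⟩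
    obtain ⟨C₂, hCf₂, hCd₂, hC₂⟩ := hset
    refine ⟨exElem '' C₁ ∪ exSet '' C₂, (hCf₁.image _).union (hCf₂.image _), ?_, ?_⟩
    · rintro _ (⟨χ, hχ, rfl⟩ | ⟨χ, hχ, rfl⟩)
      exacts [Nat.succ_le_succ (hCd₁ χ hχ), Nat.succ_le_succ (hCd₂ χ hχ)]
    intro D D' e e' s s' h R S hR hS
    have elem : ∀ (a : D) (b : D'), (∀ φ ∈ Φ₁, (φ.Sat (restrictPred P D) (Fin.cons a e) s ↔
        φ.Sat (restrictPred P D') (Fin.cons b e') s')) →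
        BackForth D D' n (insert ((a : N), (b : N)) R) S := by
      intro a b hab
      refine h₁ D D' _ _ _ _ hab _ _ ?_ hS
      rintro r (rfl | hr)
      · exact ⟨0, rfl⟩
      · obtain ⟨i, rfl⟩ := hR r hr
        exact ⟨i.succ, rfl⟩
    have set : ∀ (A B : Set N), (∀ φ ∈ Φ₂,
        (φ.Sat (restrictPred P D) e (Fin.cons (Subtype.val ⁻¹' A) s) ↔
          φ.Sat (restrictPred P D') e' (Fin.cons (Subtype.val ⁻¹' B) s'))) →
        BackForth D D' n R (insert (A, B) S) := by
      intro A B hAB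
      refine h₂ D D' _ _ _ _ hAB _ _ hR ?_
      rintro q (rfl | hq)
      · exact Or.inr ⟨0, rfl, rfl⟩
      · obtain hp | ⟨i, hi⟩ := hS q hq
        exacts [Or.inl hp, Or.inr ⟨i.succ, hi⟩]
    obtain ⟨hforth, hback⟩ := hC₂ D D' e e' s s' fun χ hχ => h _ (Or.inr ⟨χ, hχ, rfl⟩)
    refine ⟨fun a ha => ?_, fun b hb => ?_, fun A => ?_, fun B => ?_⟩
    · obtain ⟨χ, hχ, hsat, hχ'⟩ := hC₁ _ (restrictPred P D) (Fin.cons ⟨a, ha⟩ e) s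
      obtain ⟨b, hb⟩ := (h _ (Or.inl ⟨χ, hχ, rfl⟩)).1 ⟨_, hsat⟩
      exact ⟨b, b.2, elem _ b (hχ' _ _ _ _ hb)⟩
    · obtain ⟨χ, hχ, hsat, hχ'⟩ := hC₁ _ (restrictPred P D') (Fin.cons ⟨b, hb⟩ e') s'
      obtain ⟨a, ha⟩ := (h _ (Or.inl ⟨χ, hχ, rfl⟩)).2 ⟨_, hsat⟩
      exact ⟨a, a.2, elem a _ fun φ hφ => (hχ' _ _ _ _ ha φ hφ).symm⟩
    · obtain ⟨B, hB⟩ := hforth (Subtype.val ⁻¹' A)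
      refine ⟨Subtype.val '' B, set A _ ?_⟩
      rwa [Set.preimage_image_eq _ Subtype.val_injective]
    · obtain ⟨A, hA⟩ := hback (Subtype.val ⁻¹' B)
      refine ⟨Subtype.val '' A, set _ B ?_⟩
      rwa [Set.preimage_image_eq _ Subtype.val_injective]

/-- Structures satisfying the same sentences of depth at most `n` are back-and-forth equivalent. -/
theorem backForth_of_satS {N : Type} [LinearOrder N] {m : ℕ} (P : Fin m → Set N) {n : ℕ}
    {D D' : Set N} (h : ∀ φ : MSO m 0 0, φ.depth ≤ n →
      (SatS (restrictPred P D) φ ↔ SatS (restrictPred P D') φ)) :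
    BackForth D D' n ∅ (Set.range fun p => (P p, P p)) := by
  obtain ⟨Φ, -, hd, hΦ⟩ := exists_finite_backForth P n 0 0
  refine hΦ D D' _ _ _ _ (fun φ hφ => h φ (hd φ hφ)) _ _ (by simp) ?_
  rintro _ ⟨p, rfl⟩
  exact Or.inl ⟨p, rfl⟩

end MSO

/-- If `ω₁` does not embed in `N`, then every subset of `N` without last element has a countable
cofinal subset. -/
theorem exists_nat_cofinal {N : Type*} [LinearOrder N]
    (hN : ¬ ∃ f : ↥(Set.Iio (Cardinal.aleph 1).ord) → N, StrictMono f)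
    {J : Set N} (hne : J.Nonempty) (hJ : ∀ x ∈ J, ∃ y ∈ J, x < y) :
    ∃ g : ℕ → N, (∀ i, g i ∈ J) ∧ ∀ x ∈ J, ∃ i, x < g i := by
  by_contra hcof
  apply hN
  have bound : ∀ C : Set N, C.Countable → ∃ y ∈ J, C ⊆ J → ∀ x ∈ C, x < y := by
    intro C hC
    obtain rfl | hCne := C.eq_empty_or_nonempty
    · obtain ⟨y, hy⟩ := hne
      exact ⟨y, hy, by simp⟩
    obtain ⟨g, rfl⟩ := hC.exists_eq_range hCne
    by_cases hg : Set.range g ⊆ J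
    · by_contra! hno
      refine hcof ⟨g, fun i => hg ⟨i, rfl⟩, fun x hx => ?_⟩
      obtain ⟨y, hy, hxy⟩ := hJ x hx
      obtain ⟨-, _, ⟨i, rfl⟩, hi⟩ := hno y hy
      exact ⟨i, hxy.trans_le hi⟩
    · obtain ⟨y, hy⟩ := hne
      exact ⟨y, hy, fun h => absurd h hg⟩
  choose b hbJ hb using fun C : {C : Set N // C.Countable} => bound C C.2
  have hcount : ∀ i : ↥(Set.Iio (Cardinal.aleph 1).ord), Countable (Set.Iio i) := by
    rintro ⟨i, hi⟩
    have hi' : Countable (Set.Iio i) := by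
      rw [← Cardinal.mk_le_aleph0_iff, Cardinal.mk_Iio_ordinal, Cardinal.lift_le_aleph0,
        ← Cardinal.lt_aleph_one_iff]
      exact Cardinal.lt_ord.1 hi
    exact Function.Injective.countable (β := Set.Iio i)
      (f := fun x => ⟨x.1.1, x.2⟩) fun x y h => Subtype.ext (Subtype.ext (Subtype.mk.inj h))
  let f : ↥(Set.Iio (Cardinal.aleph 1).ord) → N :=
    wellFounded_lt.fix fun i F => b ⟨Set.range fun j : Set.Iio i => F j.1 j.2,
      haveI := hcount i; Set.countable_range _⟩
  have hf : ∀ i, f i = b ⟨Set.range fun j : Set.Iio i => f j.1,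
      haveI := hcount i; Set.countable_range _⟩ := fun i => wellFounded_lt.fix_eq _ i
  have hfJ : ∀ i, f i ∈ J := fun i => hf i ▸ hbJ _
  refine ⟨f, fun i j hij => ?_⟩
  rw [hf j]
  refine hb _ ?_ _ ⟨⟨i, hij⟩, rfl⟩
  rintro _ ⟨x, rfl⟩
  exact hfJ _

/-- If `ω₁` does not embed in `N`, then above each point of a convex set without last element there
is an increasing cofinal sequence from a dense set. -/
theorem exists_strictMono_cofinal {N : Type*} [LinearOrder N]
    (hN : ¬ ∃ f : ↥(Set.Iio (Cardinal.aleph 1).ord) → N, StrictMono f)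
    {I J : Set N} (hI : ∀ x y : N, x < y → ∃ z ∈ I, x < z ∧ z < y) (hconv : J.OrdConnected)
    (hJ : ∀ x ∈ J, ∃ y ∈ J, x < y) {x₀ : N} (h₀ : x₀ ∈ I ∩ J) :
    ∃ c : ℕ → N, c 0 = x₀ ∧ StrictMono c ∧ (∀ i, c i ∈ I ∩ J) ∧ ∀ x ∈ J, ∃ i, x < c i := by
  obtain ⟨g, hgJ, hg⟩ := exists_nat_cofinal hN ⟨x₀, h₀.2⟩ hJ
  have next : ∀ x y : J, ∃ z : ↥(I ∩ J), (x : N) < z ∧ (y : N) < z := by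
    intro x y
    obtain ⟨u, hu, hxu⟩ := hJ _ (max x y).2
    obtain ⟨z, hz, hz1, hz2⟩ := hI _ _ hxu
    refine ⟨⟨z, hz, hconv.out (max x y).2 hu ⟨hz1.le, hz2.le⟩⟩, ?_, ?_⟩
    · exact lt_of_le_of_lt (le_max_left x y) hz1
    · exact lt_of_le_of_lt (le_max_right x y) hz1
  choose F hF1 hF2 using next
  let c : ℕ → ↥(I ∩ J) := fun n =>
    Nat.rec ⟨x₀, h₀⟩ (fun n z => F ⟨z.1, z.2.2⟩ ⟨g n, hgJ n⟩) n
  refine ⟨fun n => (c n).1, rfl, strictMono_nat_of_lt_succ fun n => ?_, fun n => (c n).2,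
    fun x hx => ?_⟩
  · exact hF1 ⟨(c n).1, (c n).2.2⟩ ⟨g n, hgJ n⟩
  · obtain ⟨i, hi⟩ := hg x hx
    exact ⟨i + 1, hi.trans (hF2 ⟨(c i).1, (c i).2.2⟩ ⟨g i, hgJ i⟩)⟩

/-- A convex set without endpoints is the union of the consecutive intervals determined by a
`ℤ`-indexed increasing sequence from a dense set. -/
theorem exists_int_partition {N : Type*} [LinearOrder N]
    (h1 : ¬ ∃ f : ↥(Set.Iio (Cardinal.aleph 1).ord) → N, StrictMono f)
    (h2 : ¬ ∃ f : ↥(Set.Iio (Cardinal.aleph 1).ord) → N, StrictAnti f)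
    {I J : Set N} (hI : ∀ x y : N, x < y → ∃ z ∈ I, x < z ∧ z < y) (hne : J.Nonempty)
    (hconv : J.OrdConnected) (hbot : ∀ x ∈ J, ∃ y ∈ J, y < x) (htop : ∀ x ∈ J, ∃ y ∈ J, x < y) :
    ∃ c : ℤ → N, StrictMono c ∧ (∀ i, c i ∈ I) ∧ ⋃ i, Set.Ico (c i) (c (i + 1)) = J := by
  obtain ⟨x₀, h₀⟩ : (I ∩ J).Nonempty := by
    obtain ⟨x, hx⟩ := hne
    obtain ⟨y, hy, hxy⟩ := htop x hx
    obtain ⟨z, hz, hxz, hzy⟩ := hI x y hxy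
    exact ⟨z, hz, hconv.out hx hy ⟨hxz.le, hzy.le⟩⟩
  obtain ⟨a, ha0, ha, haIJ, hacof⟩ := exists_strictMono_cofinal h1 hI hconv htop h₀
  obtain ⟨b, hb0, hb, hbIJ, hbcof⟩ : ∃ b : ℕ → N, b 0 = x₀ ∧ StrictAnti b ∧
      (∀ i, b i ∈ I ∩ J) ∧ ∀ x ∈ J, ∃ i, b i < x :=
    exists_strictMono_cofinal (N := Nᵒᵈ) (I := OrderDual.ofDual ⁻¹' I)
      (J := OrderDual.ofDual ⁻¹' J) h2
      (fun x y hxy => by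
        obtain ⟨z, hz, hyz, hzx⟩ := hI (OrderDual.ofDual y) (OrderDual.ofDual x) hxy
        exact ⟨OrderDual.toDual z, hz, hzx, hyz⟩)
      hconv.dual hbot h₀
  let c : ℤ → N := fun i => match i with
    | Int.ofNat n => a n
    | Int.negSucc n => b (n + 1)
  have hc : StrictMono c := by
    refine strictMono_int_of_lt_succ fun i => ?_
    match i with
    | Int.ofNat n => exact ha n.lt_succ_self
    | Int.negSucc 0 =>
      change b 1 < a 0
      rw [ha0, ← hb0]
      exact hb zero_lt_one
    | Int.negSucc (n + 1) => exact hb (Nat.lt_succ_self _)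
  have hcIJ : ∀ i, c i ∈ I ∩ J := fun i => match i with
    | Int.ofNat n => haIJ n
    | Int.negSucc n => hbIJ (n + 1)
  refine ⟨c, hc, fun i => (hcIJ i).1, Set.Subset.antisymm ?_ fun x hx => ?_⟩
  · refine Set.iUnion_subset fun i x hx => ?_
    exact hconv.out (hcIJ i).2 (hcIJ (i + 1)).2 ⟨hx.1, hx.2.le⟩
  · obtain ⟨i, hi⟩ := hacof x hx
    obtain ⟨j, hj⟩ := hbcof x hx
    obtain ⟨k, hk, hmax⟩ := Int.exists_greatest_of_bdd (P := fun k => c k ≤ x)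
      ⟨Int.ofNat i, fun k hk => (hc.lt_iff_lt (b := Int.ofNat i).1 (lt_of_le_of_lt hk hi)).le⟩
      ⟨Int.negSucc j, ((hb j.lt_succ_self).trans hj).le⟩
    refine Set.mem_iUnion.2 ⟨k, hk, not_le.1 fun h => ?_⟩
    exact absurd (hmax _ h) (by lia)

/-- (Shelah, Lemma 5.3.) Let `N` be a dense linear order embedding neither `ω₁` nor
`ω₁*`, `I ⊆ N` dense, such that all restrictions `(N,P̄)↾[a,b)` for `a < b` in `I` have
the same monadic theory up to depth `n`. Then any two nonempty convex subsets of `N`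
with no first and no last element have the same monadic theory up to depth `n`. -/
theorem convex_pieces_same_theory
    (N : Type) [LinearOrder N] [DenselyOrdered N]
    (h1 : ¬ ∃ f : ↥(Set.Iio (Cardinal.aleph 1).ord) → N, StrictMono f)
    (h2 : ¬ ∃ f : ↥(Set.Iio (Cardinal.aleph 1).ord) → N, StrictAnti f)
    (m : ℕ) (P : Fin m → Set N) (I : Set N)
    (hIdense : ∀ x y : N, x < y → ∃ z ∈ I, x < z ∧ z < y)
    (n : ℕ)
    (hconst : ∀ a ∈ I, ∀ b ∈ I, ∀ a' ∈ I, ∀ b' ∈ I, a < b → a' < b' →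
      ∀ φ : MSO m 0 0, φ.depth ≤ n →
        (MSO.SatS (restrictPred P (Set.Ico a b)) φ ↔
         MSO.SatS (restrictPred P (Set.Ico a' b')) φ)) :
    ∀ J₁ J₂ : Set N, J₁.Nonempty → J₂.Nonempty →
      (∀ x ∈ J₁, ∀ y ∈ J₁, ∀ z : N, x ≤ z → z ≤ y → z ∈ J₁) →
      (∀ x ∈ J₂, ∀ y ∈ J₂, ∀ z : N, x ≤ z → z ≤ y → z ∈ J₂) →
      (∀ x ∈ J₁, ∃ y ∈ J₁, y < x) → (∀ x ∈ J₁, ∃ y ∈ J₁, x < y) →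
      (∀ x ∈ J₂, ∃ y ∈ J₂, y < x) → (∀ x ∈ J₂, ∃ y ∈ J₂, x < y) →
      ∀ φ : MSO m 0 0, φ.depth ≤ n →
        (MSO.SatS (restrictPred P J₁) φ ↔ MSO.SatS (restrictPred P J₂) φ) := by
  intro J₁ J₂ hne₁ hne₂ hconv₁ hconv₂ hbot₁ htop₁ hbot₂ htop₂ φ hφ
  obtain ⟨c, hc, hcI, rfl⟩ := exists_int_partition h1 h2 hIdense hne₁
    ⟨fun x hx y hy z hz => hconv₁ x hx y hy z hz.1 hz.2⟩ hbot₁ htop₁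
  obtain ⟨d, hd, hdI, rfl⟩ := exists_int_partition h1 h2 hIdense hne₂
    ⟨fun x hx y hy z hz => hconv₂ x hx y hy z hz.1 hz.2⟩ hbot₂ htop₂
  have separated : ∀ {c : ℤ → N}, StrictMono c → ∀ i j, i < j →
      ∀ x ∈ Set.Ico (c i) (c (i + 1)), ∀ y ∈ Set.Ico (c j) (c (j + 1)), x < y :=
    fun hc i j hij x hx y hy =>
      hx.2.trans_le ((hc.monotone (Int.add_one_le_of_lt hij)).trans hy.1)
  have key := BackForth.sum (separated hc) (separated hd) (n := n) (R := ∅)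
    (S := Set.range fun p => (P p, P p)) (by simp) fun i =>
      (MSO.backForth_of_satS P (hconst _ (hcI i) _ (hcI (i + 1)) _ (hdI i) _ (hdI (i + 1))
        (hc (lt_add_one i)) (hd (lt_add_one i)))).congr
        (fun r hr => absurd hr.1 (Set.notMem_empty r)) fun q hq => ⟨q, hq, by simp, by simp⟩
  exact key.sat_iff φ hφ (by simp) (fun p => ⟨p, rfl⟩) _ _ _ _ (fun i => i.elim0)
    (fun i => i.elim0)
end
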